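/- For every integer w, all integers p1, p2, and every nonnegative integer u, one has G00(w,u;p1,p2) = H(u;p1,p2); in particular G00(w,u;p1,p2) does not depend on w. -/

import Mathlib

open Finset

noncomputable section

/-- The field `ℚ(q)` of rational functions over `ℚ`. -/
abbrev F : Type := RatFunc ℚ

/-- The indeterminate `q`. -/
noncomputable def qq : F := RatFunc.X

/-- The quantum integer `[n]` with base `v`: `(v^n - v^(-n))/(v - v⁻¹)`. -/
noncomputable def qint (v : F) (n : ℤ) : F := (v ^ n - v ^ (-n)) / (v - v⁻¹)

/-- The quantum factorial `[m]! = [1][2]⋯[m]` with base `v`. -/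
noncomputable def qfact (v : F) (m : ℕ) : F := ∏ k ∈ range m, qint v ((k : ℤ) + 1)

/-- The quantum binomial coefficient `C_v(n,d) = [n][n-1]⋯[n-d+1]/[d]!` for `d ≥ 0`,
and `0` for `d < 0`. -/
noncomputable def qbinom (v : F) (n d : ℤ) : F :=
  if d < 0 then 0
  else (∏ k ∈ range d.toNat, qint v (n - (k : ℤ))) / qfact v d.toNat

/-- The function `G(w,u,ℓ;p0,p1,p2)` of [CLW, (5.1)]. -/
noncomputable def G (w : ℤ) (u ℓ : ℕ) (p0 p1 p2 : ℤ) : F :=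
  (-1 : F) ^ w * qq ^ ((u : ℤ) ^ 2 - w * (u : ℤ) + (ℓ : ℤ) * (u : ℤ)) *
  ((∑ c ∈ range (u + 1), ∑ e ∈ range (u + 1 - c), ∑ t ∈ range (ℓ + 1),
      (let r : ℕ := u - c - e;
       if Even ((t : ℤ) + w - (r : ℤ)) then
         qq ^ (-(t : ℤ) * ((ℓ : ℤ) + (u : ℤ) - 1) - (u : ℤ) * ((c : ℤ) + (e : ℤ)) + 2 * (c : ℤ)
               + (r : ℤ) * p0 + 2 * (c : ℤ) * p1 + 2 * (e : ℤ) * p2)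
           * qbinom qq (ℓ : ℤ) (t : ℤ) * qbinom qq (w + (t : ℤ) + p0) (r : ℤ)
           * qbinom (qq ^ 2) ((w + (t : ℤ) - (r : ℤ)) / 2 + p1) (c : ℤ)
           * qbinom (qq ^ 2) ((w + (t : ℤ) - (r : ℤ)) / 2 + p2) (e : ℤ)
       else 0))
  - (∑ c ∈ range (u + 1), ∑ e ∈ range (u + 1 - c), ∑ t ∈ range (ℓ + 1),
      (let r : ℕ := u - c - e;
       if ¬ Even ((t : ℤ) + w - (r : ℤ)) then
         qq ^ (-(t : ℤ) * ((ℓ : ℤ) + (u : ℤ) - 1) - ((u : ℤ) - 1) * ((c : ℤ) + (e : ℤ))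
               + (r : ℤ) * p0 + 2 * (c : ℤ) * p1 + 2 * (e : ℤ) * p2)
           * qbinom qq (ℓ : ℤ) (t : ℤ) * qbinom qq (w + (t : ℤ) + p0) (r : ℤ)
           * qbinom (qq ^ 2) (1 + (w + (t : ℤ) - (r : ℤ) - 1) / 2 + p1) (c : ℤ)
           * qbinom (qq ^ 2) ((w + (t : ℤ) - (r : ℤ) - 1) / 2 + p2) (e : ℤ)
       else 0)))

/-- The function `H(u;p1,p2)` of [CLW, (5.9)]. -/
noncomputable def H (u : ℕ) (p1 p2 : ℤ) : F :=
  ∑ c ∈ range (u + 1),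
    (let e : ℕ := u - c;
     qq ^ (2 * (c : ℤ) + 2 * (c : ℤ) * p1 + 2 * (e : ℤ) * p2)
       * qbinom (qq ^ 2) p1 (c : ℤ) * qbinom (qq ^ 2) p2 (e : ℤ))

/-- The specialization `G₀₀(w,u;p1,p2) := G(w,u,0;0,p1,p2)`. -/
noncomputable def G00 (w : ℤ) (u : ℕ) (p1 p2 : ℤ) : F := G w u 0 0 p1 p2

/-! Work with generating functions in `x` recording `u`. By the `q`-binomial theorem
`∑ c, v^(c(p-k)) C_v(p+k,c) x^c = ∏_{-k ≤ i < p} (1 + v^(2i+1) x)`, so passing from `k` to `k + 1`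
multiplies by `1 + v^(-2k-1) x`. With `v = q²`, the part of `G₀₀` with `w - r = n` is a coefficient
of the product `h_n` of two such series with `k = ⌈n/2⌉` and `k = ⌊n/2⌋`. Raising `n` by one raises
exactly one of the two `k`s, which one depending on the parity of `n`, and in both cases
`h_{n+1} = (1 + q^(-2n) x) h_n`. Both parities thus obey one recursion in `n`, and Pascal's rule for
`C_q(w,r)` cancels it: `∑ r, (-1)^r q^(r²-rw) C_q(w,r) x^r h_{w-r}` does not change when `w` becomes
`w + 1`. At `w = 0` it is `h_0`, the generating function of `H`. -/

section QBinomial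

variable {v : F}

lemma qint_ne_zero (hv₀ : v ≠ 0) (hv : ¬IsOfFinOrder v) {n : ℤ} (hn : n ≠ 0) : qint v n ≠ 0 := by
  have zpow_sub_zpow_neg_ne_zero {m : ℤ} (hm : m ≠ 0) : v ^ m - v ^ (-m) ≠ 0 := fun h ↦
    hv <| isOfFinOrder_iff_zpow_eq_one.2 ⟨m + m, by omega, by
      rw [zpow_add₀ hv₀, mul_eq_one_iff_eq_inv₀ (zpow_ne_zero m hv₀), ← zpow_neg]
      exact sub_eq_zero.1 h⟩
  refine div_ne_zero (zpow_sub_zpow_neg_ne_zero hn) ?_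
  simpa using zpow_sub_zpow_neg_ne_zero one_ne_zero

lemma qint_add (hv₀ : v ≠ 0) (m n : ℤ) :
    qint v (m + n) = v ^ m * qint v n + v ^ (-n) * qint v m := by
  simp only [qint, neg_add, zpow_add₀ hv₀]
  ring

lemma qfact_succ (v : F) (m : ℕ) : qfact v (m + 1) = qfact v m * qint v (m + 1) :=
  prod_range_succ _ _

lemma qbinom_natCast (v : F) (n : ℤ) (d : ℕ) :
    qbinom v n d = (∏ k ∈ range d, qint v (n - k)) / qfact v d := by
  simp [qbinom]

@[simp]
lemma qbinom_zero_right (v : F) (n : ℤ) : qbinom v n 0 = 1 := by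
  simp [qbinom, qfact]

lemma qbinom_zero_succ (v : F) (d : ℕ) : qbinom v 0 (d + 1 : ℕ) = 0 := by
  rw [qbinom_natCast, prod_range_succ']
  simp [qint]

lemma qbinom_succ_right_mul (hv₀ : v ≠ 0) (hv : ¬IsOfFinOrder v) (n : ℤ) (d : ℕ) :
    qbinom v n (d + 1 : ℕ) * qint v (d + 1) = qbinom v n d * qint v (n - d) := by
  have hd : qint v (d + 1) ≠ 0 := qint_ne_zero hv₀ hv (by omega)
  rw [qbinom_natCast, qbinom_natCast, prod_range_succ, qfact_succ]
  field_simp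

lemma qbinom_add_one_succ_mul (hv₀ : v ≠ 0) (hv : ¬IsOfFinOrder v) (n : ℤ) (d : ℕ) :
    qbinom v (n + 1) (d + 1 : ℕ) * qint v (d + 1) = qbinom v n d * qint v (n + 1) := by
  have hd : qint v (d + 1) ≠ 0 := qint_ne_zero hv₀ hv (by omega)
  rw [qbinom_natCast, qbinom_natCast, prod_range_succ', qfact_succ]
  simp only [Nat.cast_add, Nat.cast_one, add_sub_add_right_eq_sub, Nat.cast_zero, sub_zero]
  field_simp

theorem qbinom_pascal (hv₀ : v ≠ 0) (hv : ¬IsOfFinOrder v) (n : ℤ) (d : ℕ) :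
    qbinom v (n + 1) (d + 1 : ℕ) =
      v ^ ((d : ℤ) + 1) * qbinom v n (d + 1 : ℕ) + v ^ (-(n - d)) * qbinom v n d := by
  have hd : qint v (d + 1) ≠ 0 := qint_ne_zero hv₀ hv (by omega)
  have hadd := qint_add hv₀ (d + 1) (n - d)
  rw [show (d : ℤ) + 1 + (n - d) = n + 1 by ring] at hadd
  refine mul_right_cancel₀ hd ?_
  rw [qbinom_add_one_succ_mul hv₀ hv, hadd, add_mul, mul_assoc _ (qbinom v n (d + 1 : ℕ)),
    qbinom_succ_right_mul hv₀ hv]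
  ring

end QBinomial

section GeneratingFunctions

open PowerSeries

lemma sq_zpow {α : Type*} [DivisionMonoid α] (a : α) (n : ℤ) : (a ^ 2) ^ n = a ^ (2 * n) := by
  rw [zpow_mul, zpow_ofNat]

lemma rescale_C {R : Type*} [CommSemiring R] (a b : R) : rescale a (C b) = C b := by
  ext (_ | n) <;> simp

lemma sum_antidiagonal_coeff_mul_add_one {R : Type*} [CommRing R] {s : ℤ → R} {h : ℤ → R⟦X⟧}
    {a : ℤ → ℕ → R} (hh : ∀ n, h (n + 1) = (1 + C (s n) * X) * h n)
    (ha₀ : ∀ w, a (w + 1) 0 = a w 0)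
    (ha : ∀ w r, a (w + 1) (r + 1) = a w (r + 1) - s (w - r) * a w r) (w : ℤ) (u : ℕ) :
    ∑ x ∈ antidiagonal u, coeff x.1 (h (w + 1 - x.2)) * a (w + 1) x.2 =
      ∑ x ∈ antidiagonal u, coeff x.1 (h (w - x.2)) * a w x.2 := by
  have hh₀ (n : ℤ) : coeff 0 (h (n + 1)) = coeff 0 (h n) := by simp [hh]
  have hh_succ (n : ℤ) (m : ℕ) :
      coeff (m + 1) (h (n + 1)) = coeff (m + 1) (h n) + s n * coeff m (h n) := by
    rw [hh, add_mul, one_mul, mul_assoc, map_add, coeff_C_mul, coeff_succ_X_mul]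
  have hshift (r : ℕ) : w + 1 - (r : ℤ) = w - r + 1 := by ring
  cases u with
  | zero => simp [hh, ha₀]
  | succ u =>
    have ha_sum : ∑ x ∈ antidiagonal (u + 1), coeff x.1 (h (w + 1 - x.2)) * a (w + 1) x.2 =
        ∑ x ∈ antidiagonal (u + 1), coeff x.1 (h (w + 1 - x.2)) * a w x.2 -
          ∑ x ∈ antidiagonal u, coeff x.1 (h (w - x.2)) * (s (w - x.2) * a w x.2) := by
      rw [Nat.sum_antidiagonal_succ', Nat.sum_antidiagonal_succ', add_sub_assoc (_ * _),
        ← sum_sub_distrib]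
      simp only [ha₀, ha, mul_sub, Nat.cast_add, Nat.cast_one, add_sub_add_right_eq_sub]
    have hh_sum : ∑ x ∈ antidiagonal (u + 1), coeff x.1 (h (w + 1 - x.2)) * a w x.2 =
        ∑ x ∈ antidiagonal (u + 1), coeff x.1 (h (w - x.2)) * a w x.2 +
          ∑ x ∈ antidiagonal u, coeff x.1 (h (w - x.2)) * (s (w - x.2) * a w x.2) := by
      rw [Nat.sum_antidiagonal_succ, Nat.sum_antidiagonal_succ, add_assoc, ← sum_add_distrib]
      simp only [hshift, hh₀, hh_succ, add_mul]
      congr! 3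
      ring
    rw [ha_sum, hh_sum, add_sub_cancel_right]

variable {v : F}

/-- The weight `(-1)^r v^(r²-rw) C_v(w,r)` of `h_{w-r}` in `G₀₀`, where `v = q`; up to the sign this
is the one-sided Gaussian binomial coefficient in base `v⁻²`. -/
def signedBinom (v : F) (w : ℤ) (r : ℕ) : F :=
  (-1) ^ r * v ^ ((r : ℤ) ^ 2 - r * w) * qbinom v w r

/-- The power series `∏_{-k ≤ i < p} (1 + v^(2i+1) x)`, read as the inverse of the product over
`p ≤ i < -k` when `p < -k`, and encoded by its expansion under the `q`-binomial theorem. -/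
def pochhammerSeries (v : F) (p k : ℤ) : F⟦X⟧ :=
  mk fun c ↦ v ^ ((c : ℤ) * (p - k)) * qbinom v (p + k) c

/-- The series `h_n`, with factors at `k = ⌈n/2⌉` and `k = ⌊n/2⌋`, which carries both the even and
the odd part of `G₀₀`. -/
def interlacedSeries (v : F) (p₁ p₂ n : ℤ) : F⟦X⟧ :=
  rescale (v ^ 2) (pochhammerSeries (v ^ 2) p₁ ((n + 1) / 2)) * pochhammerSeries (v ^ 2) p₂ (n / 2)

lemma signedBinom_zero_right (v : F) (w : ℤ) : signedBinom v w 0 = 1 := by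
  simp [signedBinom]

lemma signedBinom_zero_succ (v : F) (r : ℕ) : signedBinom v 0 (r + 1) = 0 := by
  rw [signedBinom, qbinom_zero_succ, mul_zero]

lemma signedBinom_add_one_succ (hv₀ : v ≠ 0) (hv : ¬IsOfFinOrder v) (w : ℤ) (r : ℕ) :
    signedBinom v (w + 1) (r + 1) =
      signedBinom v w (r + 1) - v ^ (-2 * (w - r)) * signedBinom v w r := by
  have hleft : v ^ (((r + 1 : ℕ) : ℤ) ^ 2 - (r + 1 : ℕ) * (w + 1)) * v ^ ((r : ℤ) + 1) =
      v ^ (((r + 1 : ℕ) : ℤ) ^ 2 - (r + 1 : ℕ) * w) := by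
    rw [← zpow_add₀ hv₀]; push_cast; ring_nf
  have hright : v ^ (((r + 1 : ℕ) : ℤ) ^ 2 - (r + 1 : ℕ) * (w + 1)) * v ^ (-(w - r)) =
      v ^ (-2 * (w - r)) * v ^ ((r : ℤ) ^ 2 - r * w) := by
    rw [← zpow_add₀ hv₀, ← zpow_add₀ hv₀]; push_cast; ring_nf
  simp only [signedBinom, qbinom_pascal hv₀ hv]
  linear_combination (-1) ^ (r + 1) * (qbinom v w (r + 1 : ℕ) * hleft + qbinom v w r * hright)

lemma pochhammerSeries_add_one (hv₀ : v ≠ 0) (hv : ¬IsOfFinOrder v) (p k : ℤ) :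
    pochhammerSeries v p (k + 1) = (1 + C (v ^ (-2 * k - 1)) * X) * pochhammerSeries v p k := by
  ext (_ | c)
  · simp [pochhammerSeries]
  have hleft : v ^ (((c + 1 : ℕ) : ℤ) * (p - (k + 1))) * v ^ ((c : ℤ) + 1) =
      v ^ (((c + 1 : ℕ) : ℤ) * (p - k)) := by
    rw [← zpow_add₀ hv₀]; push_cast; ring_nf
  have hright : v ^ (((c + 1 : ℕ) : ℤ) * (p - (k + 1))) * v ^ (-(p + k - c)) =
      v ^ (-2 * k - 1) * v ^ ((c : ℤ) * (p - k)) := by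
    rw [← zpow_add₀ hv₀, ← zpow_add₀ hv₀]; push_cast; ring_nf
  rw [add_mul, one_mul, mul_assoc, map_add, coeff_C_mul, coeff_succ_X_mul]
  simp only [pochhammerSeries, coeff_mk, ← add_assoc p k 1, qbinom_pascal hv₀ hv]
  linear_combination qbinom v (p + k) (c + 1 : ℕ) * hleft + qbinom v (p + k) c * hright

lemma interlacedSeries_add_one (hv₀ : v ≠ 0) (hv : ¬IsOfFinOrder v) (p₁ p₂ n : ℤ) :
    interlacedSeries v p₁ p₂ (n + 1) =
      (1 + C (v ^ (-2 * n)) * X) * interlacedSeries v p₁ p₂ n := by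
  have hsucc := pochhammerSeries_add_one (pow_ne_zero 2 hv₀) (v := v ^ 2)
    (by simpa [isOfFinOrder_pow] using hv)
  obtain ⟨k, rfl | rfl⟩ := Int.even_or_odd' n
  · have hfactor : (v ^ 2) ^ (-2 * k - 1) * v ^ 2 = v ^ (-2 * (2 * k)) := by
      rw [sq_zpow, ← zpow_ofNat, ← zpow_add₀ hv₀]; ring_nf
    have hceil : (2 * k + 1 + 1) / 2 = k + 1 := by omega
    have hceil' : (2 * k + 1) / 2 = k := by omega
    have hfloor : 2 * k / 2 = k := by omega
    simp only [interlacedSeries, hceil, hceil', hfloor, hsucc p₁, map_mul, map_add, map_one,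
      rescale_C, rescale_X, ← hfactor]
    ring
  · have hfactor : (v ^ 2) ^ (-2 * k - 1) = v ^ (-2 * (2 * k + 1)) := by
      rw [sq_zpow]; ring_nf
    have hceil : (2 * k + 1 + 1 + 1) / 2 = k + 1 := by omega
    have hceil' : (2 * k + 1 + 1) / 2 = k + 1 := by omega
    have hfloor : (2 * k + 1) / 2 = k := by omega
    simp only [interlacedSeries, hceil, hceil', hfloor, hsucc p₂, ← hfactor]
    ring

theorem sum_antidiagonal_coeff_interlacedSeries_mul_signedBinom (hv₀ : v ≠ 0)
    (hv : ¬IsOfFinOrder v) (p₁ p₂ w : ℤ) (u : ℕ) :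
    ∑ x ∈ antidiagonal u, coeff x.1 (interlacedSeries v p₁ p₂ (w - x.2)) * signedBinom v w x.2 =
      coeff u (interlacedSeries v p₁ p₂ 0) := by
  have hperiodic : Function.Periodic (fun w : ℤ ↦ ∑ x ∈ antidiagonal u,
      coeff x.1 (interlacedSeries v p₁ p₂ (w - x.2)) * signedBinom v w x.2) 1 := fun w ↦
    sum_antidiagonal_coeff_mul_add_one (interlacedSeries_add_one hv₀ hv p₁ p₂)
      (fun _ ↦ by simp only [signedBinom_zero_right]) (signedBinom_add_one_succ hv₀ hv) w u
  calc
    _ = ∑ x ∈ antidiagonal u,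
          coeff x.1 (interlacedSeries v p₁ p₂ (0 - x.2)) * signedBinom v 0 x.2 := by
      simpa using hperiodic.int_mul_eq w
    _ = coeff u (interlacedSeries v p₁ p₂ 0) := by
      cases u with
      | zero => simp [signedBinom_zero_right]
      | succ u => simp [Nat.sum_antidiagonal_succ', signedBinom_zero_right, signedBinom_zero_succ]

end GeneratingFunctions

section Specialization

open PowerSeries

lemma sum_range_sum_range_sub_eq_sum_antidiagonal {M : Type*} [AddCommMonoid M] (u : ℕ)
    (f : ℕ → ℕ → ℕ → M) :
    ∑ c ∈ range (u + 1), ∑ e ∈ range (u + 1 - c), f c e (u - c - e) =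
      ∑ x ∈ antidiagonal u, ∑ y ∈ antidiagonal x.1, f y.1 y.2 x.2 := by
  rw [← sum_range_diag_flip]
  simp only [Nat.sum_antidiagonal_eq_sum_range_succ_mk, Nat.succ_eq_add_one]
  refine sum_congr rfl fun m _ ↦ sum_congr rfl fun c hc ↦ ?_
  congr! 1
  grind

lemma qq_ne_zero : qq ≠ 0 := RatFunc.X_ne_zero

lemma not_isOfFinOrder_qq : ¬IsOfFinOrder qq := fun h ↦ by
  obtain ⟨n, hn, h⟩ := h.exists_pow_eq_one
  have hX : (Polynomial.X ^ n : Polynomial ℚ) = 1 :=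
    RatFunc.algebraMap_injective ℚ (by simpa [qq] using h)
  simpa [hn.ne'] using congrArg Polynomial.natDegree hX

lemma G00_even_summand {w k : ℤ} {u c e r : ℕ} (hw : w = 2 * k + r) (hu : u = c + e + r)
    (p1 p2 : ℤ) :
    (-1) ^ w * qq ^ ((u : ℤ) ^ 2 - w * u) *
      (qq ^ (-(u * (c + e) : ℤ) + 2 * c + 2 * c * p1 + 2 * e * p2) * qbinom qq w r *
        qbinom (qq ^ 2) (k + p1) c * qbinom (qq ^ 2) (k + p2) e) =
    coeff c (rescale (qq ^ 2) (pochhammerSeries (qq ^ 2) p1 k)) *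
      coeff e (pochhammerSeries (qq ^ 2) p2 k) * signedBinom qq w r := by
  have hsign : (-1 : F) ^ w = (-1) ^ r := by
    rw [hw, zpow_add₀ (by simp), (even_two_mul k).neg_one_zpow, one_mul, zpow_natCast]
  have hpow : qq ^ ((u : ℤ) ^ 2 - w * u) *
      qq ^ (-(u * (c + e) : ℤ) + 2 * c + 2 * c * p1 + 2 * e * p2) =
      (qq ^ 2) ^ (c : ℤ) * (qq ^ 2) ^ (c * (p1 - k)) * (qq ^ 2) ^ (e * (p2 - k)) *
        qq ^ ((r : ℤ) ^ 2 - r * w) := by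
    simp only [sq_zpow, ← zpow_add₀ qq_ne_zero, hw, hu]
    push_cast
    ring_nf
  rw [zpow_natCast] at hpow
  simp only [hsign, coeff_rescale, pochhammerSeries, coeff_mk, signedBinom, add_comm k]
  linear_combination (-1) ^ r * qbinom qq w r * qbinom (qq ^ 2) (p1 + k) c *
    qbinom (qq ^ 2) (p2 + k) e * hpow

lemma G00_odd_summand {w k : ℤ} {u c e r : ℕ} (hw : w = 2 * k + 1 + r) (hu : u = c + e + r)
    (p1 p2 : ℤ) :
    (-1) ^ w * qq ^ ((u : ℤ) ^ 2 - w * u) *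
      -(qq ^ (-((u - 1) * (c + e) : ℤ) + 2 * c * p1 + 2 * e * p2) * qbinom qq w r *
        qbinom (qq ^ 2) (1 + k + p1) c * qbinom (qq ^ 2) (k + p2) e) =
    coeff c (rescale (qq ^ 2) (pochhammerSeries (qq ^ 2) p1 (k + 1))) *
      coeff e (pochhammerSeries (qq ^ 2) p2 k) * signedBinom qq w r := by
  have hsign : (-1 : F) ^ w = -(-1) ^ r := by
    rw [hw, zpow_add₀ (by simp), (odd_two_mul_add_one k).neg_one_zpow, neg_one_mul, zpow_natCast]
  have hpow : qq ^ ((u : ℤ) ^ 2 - w * u) *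
      qq ^ (-((u - 1) * (c + e) : ℤ) + 2 * c * p1 + 2 * e * p2) =
      (qq ^ 2) ^ (c : ℤ) * (qq ^ 2) ^ (c * (p1 - (k + 1))) * (qq ^ 2) ^ (e * (p2 - k)) *
        qq ^ ((r : ℤ) ^ 2 - r * w) := by
    simp only [sq_zpow, ← zpow_add₀ qq_ne_zero, hw, hu]
    push_cast
    ring_nf
  rw [zpow_natCast] at hpow
  rw [show 1 + k + p1 = p1 + (k + 1) by ring, add_comm k p2]
  simp only [hsign, coeff_rescale, pochhammerSeries, coeff_mk, signedBinom]
  linear_combination (-1) ^ r * qbinom qq w r * qbinom (qq ^ 2) (p1 + (k + 1)) c *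
    qbinom (qq ^ 2) (p2 + k) e * hpow

lemma G00_eq_sum_antidiagonal (w : ℤ) (u : ℕ) (p1 p2 : ℤ) :
    G00 w u p1 p2 = ∑ x ∈ antidiagonal u,
      coeff x.1 (interlacedSeries qq p1 p2 (w - x.2)) * signedBinom qq w x.2 := by
  simp only [G00, G, ← sum_sub_distrib, zero_add, sum_range_one, interlacedSeries, coeff_mul,
    sum_mul, mul_sum]
  rw [sum_range_sum_range_sub_eq_sum_antidiagonal u fun c e r ↦ _]
  refine sum_congr rfl fun x hx ↦ sum_congr rfl fun y hy ↦ ?_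
  obtain ⟨m, r⟩ := x
  obtain ⟨c, e⟩ := y
  have hu : u = c + e + r := by grind [HasAntidiagonal.mem_antidiagonal]
  have hr : u - c - e = r := by omega
  obtain ⟨k, hk | hk⟩ := Int.even_or_odd' (w - r)
  · have hceil : (2 * k + 1) / 2 = k := by omega
    have hw : w = 2 * k + r := by omega
    simpa [hr, hk, hceil] using G00_even_summand hw hu p1 p2
  · have hceil : (2 * k + 1 + 1) / 2 = k + 1 := by omega
    have hfloor : (2 * k + 1) / 2 = k := by omega
    have hw : w = 2 * k + 1 + r := by omega
    simpa [hr, hk, hceil, hfloor, Int.odd_iff] using G00_odd_summand hw hu p1 p2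

lemma H_eq_coeff_interlacedSeries (u : ℕ) (p1 p2 : ℤ) :
    H u p1 p2 = coeff u (interlacedSeries qq p1 p2 0) := by
  rw [interlacedSeries, coeff_mul, Nat.sum_antidiagonal_eq_sum_range_succ_mk]
  refine sum_congr rfl fun c _ ↦ ?_
  have hpow (e : ℕ) : qq ^ (2 * (c : ℤ) + 2 * c * p1 + 2 * e * p2) =
      (qq ^ 2) ^ (c : ℤ) * (qq ^ 2) ^ (c * p1) * (qq ^ 2) ^ (e * p2) := by
    simp only [sq_zpow, ← zpow_add₀ qq_ne_zero]
    ring_nf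
  simp only [hpow, zpow_natCast, pochhammerSeries, zero_add, Int.reduceDiv, sub_zero, add_zero,
    coeff_rescale, coeff_mk, EuclideanDomain.zero_div]
  ring

end Specialization

/-- `G₀₀(w,u;p1,p2) = H(u;p1,p2)`; in particular `G₀₀(w,u;p1,p2)` is independent of `w`. -/
theorem G00_eq_H (w : ℤ) (p1 p2 : ℤ) (u : ℕ) : G00 w u p1 p2 = H u p1 p2 := by
  rw [G00_eq_sum_antidiagonal, H_eq_coeff_interlacedSeries,
    sum_antidiagonal_coeff_interlacedSeries_mul_signedBinom qq_ne_zero not_isOfFinOrder_qq]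

end
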